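/- arXiv:0811.4691 — 5 statements merged into one kernel-verified Lean document; each statement's English description precedes it below -/
import Mathlib

section
/- Let A ⊆ R be an extension of integral domains where A is a Noetherian ring. Then the following statements are equivalent: (1) R is an A-subalgebra of an affine domain over A, i.e., there exists an integral domain T that is a finitely generated A-algebra together with an injective A-algebra homomorphism R → T; (2) there exists a nonzero element r of R such that the localization R[r⁻¹] of R away from r is an affine domain over A; (3) there exists a subring B of R containing the image of A such that B is an affine domain over A, and a nonzero element b of B, such that R is contained in the localization B[b⁻¹] of B away from b (the containments B ⊆ R ⊆ B[b⁻¹] taking place inside the fraction field of R). -/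
universe u v

/-- The `A`-algebra structure on the localization of `R` away from `r`, obtained by
composing `A → R → R[r⁻¹]`. -/
noncomputable def awayAlgebra {A R : Type*} [CommRing A] [CommRing R] [Algebra A R] (r : R) :
    Algebra A (Localization.Away r) :=
  ((algebraMap R (Localization.Away r)).comp (algebraMap A R)).toAlgebra

/-!
Suppose `R` embeds in a finitely generated `A`-algebra `T`. A closed point of the generic fibre of
`R → T` yields a quotient `D` of `T` which still contains `R` and is algebraic over `R`. Clearing
the denominators of the finitely many equations satisfied by generators of `D`, we find `r ≠ 0` in
`R` such that `D[r⁻¹]` is integral, hence module-finite, over `R[r⁻¹]`. As `D[r⁻¹]` is finitely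
generated over the Noetherian ring `A`, so is `R[r⁻¹]`, by the Artin–Tate lemma.

If `R[r⁻¹]` is finitely generated over `A`, then `r` and the numerators of the generators generate
a suitable `B`, with `b = r`; conversely, if `B ⊆ R ⊆ B[b⁻¹]`, then `R[b⁻¹] = B[b⁻¹]`.
-/

open TensorProduct in
theorem exists_isPrime_injective_isAlgebraic_quotient {R T : Type*} [CommRing R] [IsDomain R]
    [CommRing T] [Algebra R T] [Algebra.FiniteType R T]
    (hRT : Function.Injective (algebraMap R T)) :
    ∃ P : Ideal T, P.IsPrime ∧ Function.Injective (algebraMap R (T ⧸ P)) ∧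
      Algebra.IsAlgebraic R (T ⧸ P) := by
  let K := FractionRing R
  have : Nontrivial (K ⊗[R] T) :=
    (Algebra.TensorProduct.includeLeft_injective (S := R) (A := K) hRT).nontrivial
  obtain ⟨m, _⟩ := Ideal.exists_maximal (K ⊗[R] T)
  let L := K ⊗[R] T ⧸ m
  let : Field L := Ideal.Quotient.field m
  have : Module.Finite K L := finite_of_finite_type_of_isJacobsonRing K L
  have : Algebra.IsAlgebraic R L :=
    (IsFractionRing.comap_isAlgebraic_iff (K := K)).mpr (Algebra.IsAlgebraic.of_finite K L)
  have hRL : Function.Injective (algebraMap R L) := by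
    rw [IsScalarTower.algebraMap_eq R K L]
    exact (algebraMap K L).injective.comp (IsFractionRing.injective R K)
  let φ : T →ₐ[R] L := (Ideal.Quotient.mkₐ R m).comp Algebra.TensorProduct.includeRight
  refine ⟨RingHom.ker φ, RingHom.ker_isPrime φ, ?_,
    .of_injective (Ideal.kerLiftAlg φ) (Ideal.kerLiftAlg_injective φ)⟩
  rw [← (Ideal.kerLiftAlg φ).comp_algebraMap, RingHom.coe_comp] at hRL
  exact hRL.of_comp

theorem isIntegral_away_of_forall_isIntegral_smul {R D R' D' : Type*} [CommRing R]
    [CommRing D] [CommRing R'] [CommRing D'] [Algebra R D] [Algebra R R'] [Algebra D D']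
    [Algebra R' D'] [Algebra R D'] [IsScalarTower R D D'] [IsScalarTower R R' D']
    (r : R) [IsLocalization.Away r R'] [IsLocalization.Away (algebraMap R D r) D']
    {s : Set D} (hs : Algebra.adjoin R s = ⊤) (hint : ∀ x ∈ s, IsIntegral R (r • x)) :
    Algebra.IsIntegral R' D' := by
  have inv_mul : algebraMap R' D' (IsLocalization.Away.invSelf r) * algebraMap R D' r = 1 := by
    rw [IsScalarTower.algebraMap_apply R R' D', ← map_mul, mul_comm,
      IsLocalization.Away.mul_invSelf, map_one]
  have isIntegral_algebraMap (d : D) : IsIntegral R' (algebraMap D D' d) := by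
    suffices Algebra.adjoin R s ≤
        ((integralClosure R' D').restrictScalars R).comap (IsScalarTower.toAlgHom R D D') from
      this (hs ▸ Algebra.mem_top)
    refine Algebra.adjoin_le fun x hx ↦ .of_mul_unit inv_mul ?_
    have := (hint x hx).algebraMap (B := D') |>.tower_top (A := R')
    rwa [Algebra.smul_def, mul_comm, map_mul, ← IsScalarTower.algebraMap_apply] at this
  refine ⟨fun z ↦ ?_⟩
  obtain ⟨n, d, hd⟩ := IsLocalization.Away.surj (algebraMap R D r) z
  rw [← IsScalarTower.algebraMap_apply] at hd
  refine .of_mul_unit (y := algebraMap R D' r ^ n) (r := IsLocalization.Away.invSelf r ^ n) ?_ ?_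
  · rw [map_pow, ← mul_pow, inv_mul, one_pow]
  · exact hd ▸ isIntegral_algebraMap d

section FiniteType

variable {A R : Type*} [CommRing A] [CommRing R] [Algebra A R]

theorem exists_finiteType_away_of_isAlgebraic {D : Type*} [IsNoetherianRing A] [IsDomain R]
    [CommRing D] [Algebra R D] [Algebra A D] [IsScalarTower A R D] [Algebra.FiniteType A D]
    [Algebra.IsAlgebraic R D] (hRD : Function.Injective (algebraMap R D)) :
    ∃ r : R, r ≠ 0 ∧ Algebra.FiniteType A (Localization.Away r) := by
  obtain ⟨s, hs⟩ := (Algebra.FiniteType.of_restrictScalars_finiteType A R D).out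
  obtain ⟨r, hr, hint⟩ := Algebra.IsAlgebraic.exists_integral_multiples R s
  refine ⟨r, hr, ?_⟩
  let R' := Localization.Away r
  let D' := Localization.Away (algebraMap R D r)
  let : Algebra R' D' := (Localization.awayMap (algebraMap R D) r).toAlgebra
  have : IsScalarTower R R' D' := .of_algebraMap_eq' (IsLocalization.lift_comp _).symm
  have : IsScalarTower A R' D' := .to₁₃₄ A R R' D'
  have : Algebra.IsIntegral R' D' := isIntegral_away_of_forall_isIntegral_smul r hs hint
  have : Algebra.FiniteType R' D' := .of_restrictScalars_finiteType A R' D'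
  have : Module.Finite R' D' := Algebra.IsIntegral.finite
  have hR'D' : Function.Injective (algebraMap R' D') :=
    IsLocalization.map_injective_of_injective _ _ _ hRD
  exact ⟨fg_of_fg_of_fg A R' D' Algebra.FiniteType.out Module.Finite.fg_top hR'D'⟩

theorem exists_finiteType_away_of_injective {T : Type*} [IsNoetherianRing A] [IsDomain R]
    [CommRing T] [Algebra A T] [Algebra.FiniteType A T] (f : R →ₐ[A] T)
    (hf : Function.Injective f) :
    ∃ r : R, r ≠ 0 ∧ Algebra.FiniteType A (Localization.Away r) := by
  let : Algebra R T := f.toAlgebra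
  have : IsScalarTower A R T := .of_algHom f
  have : Algebra.FiniteType R T := .of_restrictScalars_finiteType A R T
  obtain ⟨P, _, hRP, _⟩ := exists_isPrime_injective_isAlgebraic_quotient (R := R) (T := T) hf
  exact exists_finiteType_away_of_isAlgebraic hRP

theorem exists_subalgebra_fg_forall_mul_pow_mem (r : R) (S : Type*) [CommRing S] [Algebra R S]
    [Algebra A S] [IsScalarTower A R S] [IsLocalization.Away r S] [Algebra.FiniteType A S] :
    ∃ B : Subalgebra A R, B.FG ∧ r ∈ B ∧ ∀ x : R, ∃ n : ℕ, x * r ^ n ∈ B := by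
  classical
  obtain ⟨s, hs⟩ := Algebra.FiniteType.out (R := A) (A := S)
  let numerators := IsLocalization.finsetIntegerMultiple (.powers r) s
  let B := Algebra.adjoin A (insert r numerators : Set R)
  have hrB : r ∈ B := Algebra.subset_adjoin (Set.mem_insert r _)
  refine ⟨B, ⟨insert r numerators, by rw [Finset.coe_insert]⟩, hrB, fun x ↦ ?_⟩
  obtain ⟨⟨_, n, rfl⟩, hn⟩ := IsLocalization.exists_smul_mem_of_mem_adjoin (.powers r) x s B
    ((Set.subset_insert r _).trans Algebra.subset_adjoin) (Submonoid.powers_le.mpr hrB)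
    (hs ▸ Algebra.mem_top)
  exact ⟨n, mul_comm x _ ▸ hn⟩

theorem finiteType_away_of_forall_mul_pow_mem (B : Subalgebra A R) [Algebra.FiniteType A B] (b : B)
    (hb : ∀ x : R, ∃ n : ℕ, x * (b : R) ^ n ∈ B) :
    Algebra.FiniteType A (Localization.Away (b : R)) :=
  .of_surjective (Localization.awayMapₐ B.val b) <| Localization.awayMap_surjective_iff.mpr
    fun x ↦ let ⟨n, hn⟩ := hb x; ⟨⟨_, hn⟩, n, mul_comm _ _⟩

theorem finiteType_awayAlgebra_iff (r : R) :
    @Algebra.FiniteType A (Localization.Away r) _ _ (awayAlgebra r) ↔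
      Algebra.FiniteType A (Localization.Away r) := by
  have : (awayAlgebra r : Algebra A (Localization.Away r)) = OreLocalization.instAlgebra :=
    Algebra.algebra_ext _ _ fun a ↦
      (IsScalarTower.algebraMap_apply A R (Localization.Away r) a).symm
  rw [this]

end FiniteType

theorem subalgebra_of_affine_domain_tfae_general
    {A : Type u} {R : Type v} [CommRing A] [IsNoetherianRing A] [CommRing R] [IsDomain R]
    [Algebra A R] :
    List.TFAE
      [ ∃ (T : Type (max u v)) (_ : CommRing T) (_ : Algebra A T),
          Algebra.FiniteType A T ∧ ∃ f : R →ₐ[A] T, Function.Injective f,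
        ∃ (T : Type (max u v)) (_ : CommRing T) (_ : IsDomain T) (_ : Algebra A T),
          Algebra.FiniteType A T ∧ ∃ f : R →ₐ[A] T, Function.Injective f,
        ∃ r : R, r ≠ 0 ∧ IsDomain (Localization.Away r) ∧
          @Algebra.FiniteType A (Localization.Away r) _ _ (awayAlgebra r),
        ∃ B : Subalgebra A R, Algebra.FiniteType A B ∧ ∃ b : B, b ≠ 0 ∧
          ∀ x : R, ∃ (n : ℕ) (c : B), x * (b : R) ^ n = (c : R) ] := by
  simp only [finiteType_awayAlgebra_iff]
  tfae_have 1 → 3 := by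
    rintro ⟨T, _, _, _, f, hf⟩
    obtain ⟨r, hr, hfin⟩ := exists_finiteType_away_of_injective f hf
    exact ⟨r, hr, IsLocalization.Away.isDomain _ hr, hfin⟩
  tfae_have 3 → 2 := by
    rintro ⟨r, hr, _, hfin⟩
    let e : Localization.Away r ≃ₐ[A] ULift.{u} (Localization.Away r) := ULift.algEquiv.symm
    have hinj : Function.Injective (algebraMap R (Localization.Away r)) :=
      IsLocalization.injective _ (powers_le_nonZeroDivisors_of_noZeroDivisors hr)
    exact ⟨_, _, e.symm.toMulEquiv.isDomain _, _, hfin.equiv e,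
      e.toAlgHom.comp (IsScalarTower.toAlgHom A R _), e.injective.comp hinj⟩
  tfae_have 2 → 1 := fun ⟨T, _, _, _, hT⟩ ↦ ⟨T, _, _, hT⟩
  tfae_have 3 → 4 := by
    rintro ⟨r, hr, _, _⟩
    obtain ⟨B, hB, hrB, hpow⟩ :=
      exists_subalgebra_fg_forall_mul_pow_mem (A := A) r (Localization.Away r)
    exact ⟨B, B.fg_iff_finiteType.mp hB, ⟨r, hrB⟩, Subtype.coe_ne_coe.mp hr,
      fun x ↦ (hpow x).imp fun n hn ↦ ⟨⟨_, hn⟩, rfl⟩⟩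
  tfae_have 4 → 3 := by
    rintro ⟨B, _, b, hb, hpow⟩
    have hbR : (b : R) ≠ 0 := Subtype.coe_ne_coe.mpr hb
    exact ⟨b, hbR, IsLocalization.Away.isDomain _ hbR,
      finiteType_away_of_forall_mul_pow_mem B b fun x ↦ (hpow x).imp fun n ⟨c, hc⟩ ↦ hc ▸ c.2⟩
  tfae_finish

/-- Proposition 3.1: for an extension of domains `A ⊆ R` with `A` Noetherian, the following
are equivalent: (1) `R` is an `A`-subalgebra of an affine domain over `A`; (2) there is a
nonzero `r ∈ R` such that `R[r⁻¹]` is an affine domain over `A`; (3) there is an affine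
domain `B` over `A` with `B ⊆ R` and a nonzero `b ∈ B` such that `R ⊆ B[b⁻¹]`
(i.e. every `x ∈ R` satisfies `x·bⁿ ∈ B` for some `n`). -/
theorem subalgebra_of_affine_domain_tfae
    {A : Type u} {R : Type v} [CommRing A] [IsDomain A] [IsNoetherianRing A]
    [CommRing R] [IsDomain R] [Algebra A R]
    (hAR : Function.Injective (algebraMap A R)) :
    List.TFAE
      [ -- (1) `R` embeds into an affine domain over `A`
        ∃ (T : Type (max u v)) (_ : CommRing T) (_ : IsDomain T) (_ : Algebra A T),
          Algebra.FiniteType A T ∧ ∃ f : R →ₐ[A] T, Function.Injective f,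
        -- (2) some localization `R[r⁻¹]` at a nonzero `r` is an affine domain over `A`
        ∃ r : R, r ≠ 0 ∧ IsDomain (Localization.Away r) ∧
          @Algebra.FiniteType A (Localization.Away r) _ _ (awayAlgebra r),
        -- (3) there are `B ⊆ R` affine over `A` and `0 ≠ b ∈ B` with `R ⊆ B[b⁻¹]`
        ∃ B : Subalgebra A R, Algebra.FiniteType A B ∧ ∃ b : B, b ≠ 0 ∧
          ∀ x : R, ∃ (n : ℕ) (c : B), x * (b : R) ^ n = (c : R) ] := by
  exact (List.tfae_cons_cons.mp subalgebra_of_affine_domain_tfae_general).2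
end

section
/- Let A be a Noetherian domain and R a domain containing A such that for some nonzero r ∈ R the localization R[r⁻¹] of R away from r is an affine domain over A. Then there exists a subring B of R containing A such that B is an affine domain over A and a nonzero element b ∈ B such that B ⊆ R ⊆ B[b⁻¹], where B[b⁻¹] is the localization of B away from b viewed inside the fraction field of R. -/
theorem awayAlgebra_eq_instAlgebra {A R : Type*} [CommRing A] [CommRing R] [Algebra A R] (r : R) :
    awayAlgebra r = (OreLocalization.instAlgebra : Algebra A (Localization.Away r)) :=
  Algebra.algebra_ext _ _ fun a ↦
    (IsScalarTower.algebraMap_apply A R (Localization.Away r) a).symm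

theorem exists_finiteType_subalgebra_forall_exists_mul_mem (A : Type*) {R : Type*} (S : Type*)
    [CommRing A] [CommRing R] [CommRing S] [Algebra A R] [Algebra A S] [Algebra R S]
    [IsScalarTower A R S] [Algebra.FiniteType A S] {M : Submonoid R} (hM : M.FG)
    [IsLocalization M S] :
    ∃ B : Subalgebra A R, Algebra.FiniteType A B ∧ M ≤ B.toSubmonoid ∧
      ∀ x : R, ∃ m ∈ M, m * x ∈ B := by
  classical
  obtain ⟨gens, rfl⟩ := hM
  obtain ⟨s, hs⟩ := Algebra.FiniteType.out (R := A) (A := S)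
  let numerators := IsLocalization.finsetIntegerMultiple (Submonoid.closure (gens : Set R)) s
  let B := Algebra.adjoin A (↑(gens ∪ numerators) : Set R)
  have subset_B : (↑(gens ∪ numerators) : Set R) ⊆ B := Algebra.subset_adjoin
  rw [Finset.coe_union, Set.union_subset_iff] at subset_B
  obtain ⟨gens_subset, numerators_subset⟩ := subset_B
  have closure_le : Submonoid.closure (gens : Set R) ≤ B.toSubmonoid :=
    Submonoid.closure_le.mpr gens_subset
  refine ⟨B, B.fg_iff_finiteType.mp ⟨_, rfl⟩, closure_le, fun x ↦ ?_⟩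
  have mem_adjoin : algebraMap R S x ∈ Algebra.adjoin A (s : Set S) := hs ▸ Algebra.mem_top
  -- A power of the common denominator of `s` turns a polynomial in `s` into one in `numerators`;
  -- a further factor from `M` lifts the resulting equality from `S` to `R`.
  obtain ⟨m, hm⟩ := IsLocalization.exists_smul_mem_of_mem_adjoin _ x s B numerators_subset
    closure_le mem_adjoin
  exact ⟨m, m.2, hm⟩

theorem exists_affine_subring_of_away_finiteType_general (A : Type*) {R : Type*} (S : Type*)
    [CommRing A] [CommRing R] [CommRing S] [Algebra A R] [Algebra A S] [Algebra R S]
    [IsScalarTower A R S] [Algebra.FiniteType A S] (r : R) [IsLocalization.Away r S] :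
    ∃ B : Subalgebra A R, Algebra.FiniteType A B ∧ r ∈ B ∧ ∀ x : R, ∃ n : ℕ, x * r ^ n ∈ B := by
  obtain ⟨B, hB, powers_le, exists_mul_mem⟩ :=
    exists_finiteType_subalgebra_forall_exists_mul_mem A S (Submonoid.powers_fg r)
  refine ⟨B, hB, powers_le (Submonoid.mem_powers r), fun x ↦ ?_⟩
  obtain ⟨_, ⟨n, rfl⟩, hn⟩ := exists_mul_mem x
  exact ⟨n, mul_comm x (r ^ n) ▸ hn⟩

/-- Let `A` be a Noetherian domain and `R` a domain containing `A` such that for some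
nonzero `r ∈ R` the localization `R[r⁻¹]` is an affine domain over `A`.  Then there is a
subring `B` of `R` containing `A` which is an affine domain over `A`, and a nonzero
`b ∈ B`, such that `B ⊆ R ⊆ B[b⁻¹]` (the latter containment expressed by: every `x ∈ R`
satisfies `x·bⁿ ∈ B` for some `n ≥ 0`). -/
theorem exists_affine_subring_of_away_finiteType
    {A R : Type*} [CommRing A] [IsDomain A] [IsNoetherianRing A]
    [CommRing R] [IsDomain R] [Algebra A R]
    (hAR : Function.Injective (algebraMap A R))
    (r : R) (hr : r ≠ 0)
    (hfin : @Algebra.FiniteType A (Localization.Away r) _ _ (awayAlgebra r)) :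
    ∃ B : Subalgebra A R, Algebra.FiniteType A B ∧ ∃ b : B, b ≠ 0 ∧
      ∀ x : R, ∃ (n : ℕ) (c : B), x * (b : R) ^ n = (c : R) := by
  rw [awayAlgebra_eq_instAlgebra] at hfin
  obtain ⟨B, hB, hrB, hx⟩ := exists_affine_subring_of_away_finiteType_general
    A (Localization.Away r) r
  exact ⟨B, hB, ⟨r, hrB⟩, Subtype.coe_ne_coe.mp hr, fun x ↦ (hx x).imp fun _ hn ↦ ⟨⟨_, hn⟩, rfl⟩⟩
end

section
/- Let A ⊆ R be an extension of integral domains where A is Noetherian and R is an A-subalgebra of an affine domain over A. Then there exists an affine domain T over A with R ⊆ T such that for every prime ideal p of R with pT ≠ T, the localization R_p is a Noetherian ring. -/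
universe u v

/-!
Some localization `R[1/c]` with `c ≠ 0` is an affine domain over `A`. It serves as `T`: if
`pT ≠ T`, then `c ∉ p`, so `R_p` is a localization of the Noetherian ring `R[1/c]`.

To find `c`, let `S` be an affine `A`-algebra containing `R`. The transcendence degree of `R` over
the image of `A` is finite, so `R` is algebraic over a finitely generated, hence Noetherian,
`A`-subalgebra `B`. By Zariski's lemma on the generic fibre of `B → S`, some quotient `S/P` is
algebraic over `B` and still contains `B`. Then `S/P` also contains `R`, because a nonzero ideal of
a domain algebraic over `B` meets `B` nontrivially. Clearing the denominators of generators of `S/P`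
gives `0 ≠ b ∈ B` and a finite `B`-subalgebra `C` of `S/P` into which powers of `b` carry every
element. Since `B` is Noetherian, `R ∩ C` is a finite `B`-module, and it generates `R[1/b]`
together with `1/b`.
-/

universe w

open scoped TensorProduct

theorem algebraMap_injective_of_isFractionRing {B : Type*} (K : Type*) {S : Type*} [CommRing B]
    [Field K] [CommRing S] [Nontrivial S] [Algebra B K] [IsFractionRing B K] [Algebra K S]
    [Algebra B S] [IsScalarTower B K S] : Function.Injective (algebraMap B S) := by
  rw [IsScalarTower.algebraMap_eq B K S]
  exact (algebraMap K S).injective.comp (IsFractionRing.injective B K)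

theorem isAlgebraic_quotient_of_isMaximal {B : Type*} (K : Type*) {S : Type*} [CommRing B]
    [IsDomain B] [Field K] [CommRing S] [Algebra B K] [IsFractionRing B K] [Algebra K S]
    [Algebra B S] [IsScalarTower B K S] [Algebra.FiniteType K S] (M : Ideal S) [M.IsMaximal] :
    Algebra.IsAlgebraic B (S ⧸ M) :=
  let := Ideal.Quotient.field M
  have : Module.Finite K (S ⧸ M) := finite_of_finite_type_of_isJacobsonRing K (S ⧸ M)
  IsFractionRing.comap_isAlgebraic_iff.mpr (Algebra.IsAlgebraic.of_finite K (S ⧸ M))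

theorem exists_ideal_injective_isAlgebraic_quotient (B T : Type*) [CommRing B] [IsDomain B]
    [CommRing T] [Algebra B T] [FaithfulSMul B T] [Algebra.FiniteType B T] :
    ∃ P : Ideal T,
      Function.Injective (algebraMap B (T ⧸ P)) ∧ Algebra.IsAlgebraic B (T ⧸ P) := by
  have : Nontrivial (FractionRing B ⊗[B] T) :=
    Algebra.TensorProduct.nontrivial_of_algebraMap_injective_of_flat_left B _ T
      (FaithfulSMul.algebraMap_injective B T)
  obtain ⟨M, hM⟩ := Ideal.exists_maximal (FractionRing B ⊗[B] T)
  have : Nontrivial (_ ⧸ M) := Ideal.Quotient.nontrivial_iff.mpr hM.ne_top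
  have hinj : Function.Injective (algebraMap B (_ ⧸ M)) :=
    algebraMap_injective_of_isFractionRing (FractionRing B)
  have : Algebra.IsAlgebraic B (_ ⧸ M) := isAlgebraic_quotient_of_isMaximal (FractionRing B) M
  let toGenericFiber : T →ₐ[B] FractionRing B ⊗[B] T := Algebra.TensorProduct.includeRight
  let toResidueField : T ⧸ M.comap toGenericFiber →ₐ[B] _ ⧸ M :=
    Ideal.quotientMapₐ M toGenericFiber le_rfl
  rw [← toResidueField.comp_algebraMap, RingHom.coe_comp] at hinj
  exact ⟨M.comap toGenericFiber, hinj.of_comp,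
    .of_injective toResidueField Ideal.quotientMap_injective⟩

theorem exists_ne_zero_finite_subalgebra_pow_smul_mem (B S : Type*) [CommRing B] [NoZeroDivisors B]
    [CommRing S] [Algebra B S] [Algebra.IsAlgebraic B S] [Algebra.FiniteType B S] :
    ∃ b : B, b ≠ 0 ∧ ∃ C : Subalgebra B S, Module.Finite B C ∧
      ∀ x : S, ∃ n : ℕ, b ^ n • x ∈ C := by
  obtain ⟨s, hs⟩ := Algebra.FiniteType.out (R := B) (A := S)
  obtain ⟨b, hb, hint⟩ := Algebra.IsAlgebraic.exists_integral_multiples B s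
  let C := Algebra.adjoin B ((b • ·) '' (s : Set S))
  have hC : C.toSubmodule.FG :=
    fg_adjoin_of_finite (s.finite_toSet.image _) (Set.forall_mem_image.mpr hint)
  refine ⟨b, hb, C, .of_fg hC, fun x ↦ ?_⟩
  obtain ⟨n, hn⟩ := Algebra.pow_smul_mem_of_smul_subset_of_mem_adjoin b (s : Set S) C
    Algebra.subset_adjoin (hs ▸ Algebra.mem_top : x ∈ _) (C.algebraMap_mem b)
  exact ⟨n, hn n le_rfl⟩

theorem finiteType_away_of_pow_smul_mem_fg {B R : Type*} [CommRing B] [CommRing R] [Algebra B R]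
    {b : B} {M : Submodule B R} (hM : M.FG) (hpow : ∀ r : R, ∃ n : ℕ, b ^ n • r ∈ M)
    (R' : Type*) [CommRing R'] [Algebra R R'] [Algebra B R'] [IsScalarTower B R R']
    [IsLocalization.Away (algebraMap B R b) R'] : Algebra.FiniteType B R' := by
  classical
  obtain ⟨t, rfl⟩ := hM
  let bInv : R' := IsLocalization.Away.invSelf (algebraMap B R b)
  have hbInv : algebraMap B R' b * bInv = 1 := by
    rw [IsScalarTower.algebraMap_apply B R R', IsLocalization.Away.mul_invSelf]
  let toR' : R →ₐ[B] R' := IsScalarTower.toAlgHom B R R'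
  let C := Algebra.adjoin B (insert bInv (t.image toR') : Set R')
  have hspan : Submodule.span B (t : Set R) ≤ C.toSubmodule.comap toR'.toLinearMap :=
    Submodule.span_le.mpr fun r hr ↦ Algebra.subset_adjoin <|
      Set.mem_insert_of_mem _ <| Finset.mem_image_of_mem _ hr
  have hbInvC : bInv ∈ C := Algebra.subset_adjoin (Set.mem_insert _ _)
  refine ⟨⟨insert bInv (t.image toR'), ?_⟩⟩
  rw [Finset.coe_insert, eq_top_iff]
  rintro x -
  obtain ⟨n, r, hr⟩ := IsLocalization.Away.surj (algebraMap B R b) x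
  obtain ⟨m, hm⟩ := hpow r
  have hxr : x * algebraMap B R' b ^ n = toR' r := by
    rwa [IsScalarTower.algebraMap_apply B R R']
  have hx : x = bInv ^ (n + m) * toR' (b ^ m • r) := calc
    x = (algebraMap B R' b * bInv) ^ (n + m) * x := by rw [hbInv, one_pow, one_mul]
    _ = bInv ^ (n + m) * (algebraMap B R' b ^ m * (x * algebraMap B R' b ^ n)) := by ring
    _ = bInv ^ (n + m) * toR' (b ^ m • r) := by rw [hxr, map_smul, Algebra.smul_def, map_pow]
  rw [hx]
  exact C.mul_mem (C.pow_mem hbInvC _) (hspan hm)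

theorem fg_comap_of_injective {B M N : Type*} [Ring B] [IsNoetherianRing B] [AddCommGroup M]
    [Module B M] [AddCommGroup N] [Module B N] {f : M →ₗ[B] N} (hf : Function.Injective f)
    {C : Submodule B N} (hC : C.FG) : (C.comap f).FG :=
  Submodule.fg_of_fg_map_injective f hf (hC.of_le (Submodule.map_comap_le f C))

theorem exists_ne_zero_finiteType_away_of_isAlgebraic (B R T : Type*) [CommRing B]
    [IsNoetherianRing B] [CommRing R] [IsDomain R] [CommRing T] [Algebra B R] [Algebra R T]
    [Algebra B T] [IsScalarTower B R T] [FaithfulSMul B R] [FaithfulSMul R T]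
    [Algebra.IsAlgebraic B R] [Algebra.FiniteType B T] :
    ∃ b : B, b ≠ 0 ∧ Algebra.FiniteType B (Localization.Away (algebraMap B R b)) := by
  have : IsDomain B := (FaithfulSMul.algebraMap_injective B R).isDomain (algebraMap B R)
  have : FaithfulSMul B T := .trans B R T
  obtain ⟨P, hP, _⟩ := exists_ideal_injective_isAlgebraic_quotient B T
  obtain ⟨b, hb, C, _, hC⟩ := exists_ne_zero_finite_subalgebra_pow_smul_mem B (T ⧸ P)
  let toQuotient : R →ₐ[B] T ⧸ P := IsScalarTower.toAlgHom B R (T ⧸ P)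
  have hinj : Function.Injective toQuotient :=
    Algebra.IsAlgebraic.injective_tower_top R hP
  have hfg : (C.toSubmodule.comap toQuotient.toLinearMap).FG :=
    fg_comap_of_injective hinj (Module.Finite.iff_fg.mp ‹_›)
  have hpow (r : R) : ∃ n : ℕ, b ^ n • r ∈ C.toSubmodule.comap toQuotient.toLinearMap := by
    simpa using hC (toQuotient r)
  exact ⟨b, hb, finiteType_away_of_pow_smul_mem_fg hfg hpow _⟩

theorem exists_fg_subalgebra_isAlgebraic_of_faithfulSMul (A R T : Type*) [CommRing A] [IsDomain A]
    [CommRing R] [CommRing T] [Algebra A R] [Algebra A T] [Algebra R T] [IsScalarTower A R T]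
    [FaithfulSMul A R] [FaithfulSMul R T] [Algebra.FiniteType A T] :
    ∃ B : Subalgebra A R, B.FG ∧ Algebra.IsAlgebraic B R := by
  obtain ⟨s, hs⟩ := exists_isTranscendenceBasis A R
  have hindep : AlgebraicIndependent A (fun x : s ↦ algebraMap R T x) :=
    hs.1.map' (f := IsScalarTower.toAlgHom A R T) (FaithfulSMul.algebraMap_injective R T)
  have hcard := hindep.lift_cardinalMk_le_trdeg.trans_lt
    (Cardinal.lift_lt_aleph0.mpr trdeg_lt_aleph0_of_finiteType)
  have hfin : s.Finite := Cardinal.lt_aleph0_iff_set_finite.mp (Cardinal.lift_lt_aleph0.mp hcard)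
  have halg := hs.isAlgebraic
  rw [Subtype.range_coe] at halg
  exact ⟨Algebra.adjoin A s, Subalgebra.fg_def.mpr ⟨s, hfin, rfl⟩, halg⟩

theorem exists_fg_subalgebra_isAlgebraic (A R T : Type*) [CommRing A] [CommRing R] [IsDomain R]
    [CommRing T] [Algebra A R] [Algebra A T] [Algebra R T] [IsScalarTower A R T]
    [FaithfulSMul R T] [Algebra.FiniteType A T] :
    ∃ B : Subalgebra A R, B.FG ∧ Algebra.IsAlgebraic B R := by
  let A' : Subalgebra A R := ⊥
  have : Algebra.FiniteType A' T := .of_restrictScalars_finiteType A A' T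
  obtain ⟨B, hB, halg⟩ := exists_fg_subalgebra_isAlgebraic_of_faithfulSMul A' R T
  have hAA' : Algebra.FiniteType A A' := A'.fg_iff_finiteType.mp Subalgebra.fg_bot
  have hAB : Algebra.FiniteType A B := hAA'.trans (B.fg_iff_finiteType.mp hB)
  exact ⟨B.restrictScalars A, (Subalgebra.fg_iff_finiteType _).mpr hAB, halg⟩

-- Transitivity cannot be applied directly to a subalgebra `B` of `R`: instance search then finds
-- `Subalgebra.toAlgebra` on the localization instead of `OreLocalization.instAlgebra`.
theorem finiteType_localization_trans {A : Type*} (B : Type*) {R : Type*} [CommRing A] [CommRing B]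
    [CommRing R] [Algebra A B] [Algebra A R] [Algebra B R] [IsScalarTower A B R]
    [Algebra.FiniteType A B] {M : Submonoid R} (h : Algebra.FiniteType B (Localization M)) :
    Algebra.FiniteType A (Localization M) :=
  .trans (S := B) ‹_› h

theorem exists_ne_zero_finiteType_away (A R T : Type*) [CommRing A] [IsNoetherianRing A]
    [CommRing R] [IsDomain R] [CommRing T] [Algebra A R] [Algebra A T] [Algebra R T]
    [IsScalarTower A R T] [FaithfulSMul R T] [Algebra.FiniteType A T] :
    ∃ c : R, c ≠ 0 ∧ Algebra.FiniteType A (Localization.Away c) := by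
  obtain ⟨B, hB, _⟩ := exists_fg_subalgebra_isAlgebraic A R T
  have : Algebra.FiniteType A B := B.fg_iff_finiteType.mp hB
  have : IsNoetherianRing B := Algebra.FiniteType.isNoetherianRing A B
  have : Algebra.FiniteType B T := .of_restrictScalars_finiteType A B T
  obtain ⟨b, hb, hfin⟩ := exists_ne_zero_finiteType_away_of_isAlgebraic B R T
  exact ⟨b, by simpa using hb, finiteType_localization_trans B hfin⟩

theorem isNoetherianRing_localization_of_le {R : Type*} [CommRing R] {M N : Submonoid R}
    (h : M ≤ N) [IsNoetherianRing (Localization M)] : IsNoetherianRing (Localization N) := by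
  let := IsLocalization.localizationAlgebraOfSubmonoidLe (Localization M) (Localization N) M N h
  have := IsLocalization.localization_isScalarTower_of_submonoid_le
    (Localization M) (Localization N) M N h
  have := IsLocalization.isLocalization_of_submonoid_le (Localization M) (Localization N) M N h
  exact IsLocalization.isNoetherianRing (N.map (algebraMap R (Localization M))) _ ‹_›

theorem exists_affine_overring_with_noetherian_localizations_general
    {A : Type u} {R : Type v} {S : Type w} [CommRing A] [IsNoetherianRing A]
    [CommRing R] [IsDomain R] [Algebra A R] [CommRing S] [Algebra A S] [Algebra.FiniteType A S]
    (f : R →ₐ[A] S) (hf : Function.Injective f) :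
    ∃ (T : Type (max u v)) (_ : CommRing T) (_ : IsDomain T) (_ : Algebra A T),
      Algebra.FiniteType A T ∧ ∃ ι : R →ₐ[A] T, Function.Injective ι ∧
        ∀ (p : Ideal R) (_ : p.IsPrime),
          Ideal.map (ι : R →+* T) p ≠ ⊤ → IsNoetherianRing (Localization.AtPrime p) := by
  algebraize [f.toRingHom]
  have : FaithfulSMul R S := (faithfulSMul_iff_algebraMap_injective R S).mpr hf
  obtain ⟨c, hc, hfin⟩ := exists_ne_zero_finiteType_away A R S
  have hpowers := powers_le_nonZeroDivisors_of_noZeroDivisors hc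
  have : IsDomain (Localization.Away c) := IsLocalization.isDomain_localization hpowers
  have : IsNoetherianRing (Localization.Away c) := Algebra.FiniteType.isNoetherianRing A _
  let e : Localization.Away c ≃ₐ[A] ULift.{u} (Localization.Away c) := ULift.algEquiv.symm
  refine ⟨ULift.{u} (Localization.Away c), inferInstance, e.symm.toMulEquiv.isDomain _,
    inferInstance, hfin.equiv e, e.toAlgHom.comp (IsScalarTower.toAlgHom A R _),
    e.injective.comp (IsLocalization.injective _ hpowers), fun p _ hpT ↦ ?_⟩
  have hcp : c ∉ p := fun hcp ↦ hpT <| Ideal.eq_top_of_isUnit_mem _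
    (Ideal.mem_map_of_mem _ hcp) ((IsLocalization.Away.algebraMap_isUnit c).map e)
  exact isNoetherianRing_localization_of_le (Submonoid.powers_le.mpr hcp)

/-- Corollary 3.2: Let `A ⊆ R` be an extension of domains where `A` is Noetherian and `R`
is an `A`-subalgebra of an affine domain over `A`.  Then there exists an affine domain `T`
over `A` with `R ⊆ T` such that for every prime ideal `p` of `R` with `pT ≠ T`, the
localization `R_p` is Noetherian. -/
theorem exists_affine_overring_with_noetherian_localizations
    {A : Type u} {R : Type v} [CommRing A] [IsDomain A] [IsNoetherianRing A]
    [CommRing R] [IsDomain R] [Algebra A R]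
    (hAR : Function.Injective (algebraMap A R))
    (hsub : ∃ (T : Type (max u v)) (_ : CommRing T) (_ : IsDomain T) (_ : Algebra A T),
      Algebra.FiniteType A T ∧ ∃ f : R →ₐ[A] T, Function.Injective f) :
    ∃ (T : Type (max u v)) (_ : CommRing T) (_ : IsDomain T) (_ : Algebra A T),
      Algebra.FiniteType A T ∧ ∃ ι : R →ₐ[A] T, Function.Injective ι ∧
        ∀ (p : Ideal R) (hp : p.IsPrime),
          Ideal.map (ι : R →+* T) p ≠ ⊤ → IsNoetherianRing (Localization.AtPrime p) := by
  obtain ⟨S, _, _, _, _, f, hf⟩ := hsub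
  exact exists_affine_overring_with_noetherian_localizations_general f hf
end

section
/- Let k be a field and R a k-subalgebra of an affine domain T over k. Then the Krull dimension of R equals the transcendence degree over k of the fraction field of R. -/
/-- The transcendence degree of a commutative `k`-algebra `A`: the supremum of the
cardinalities of the subsets of `A` that are algebraically independent over `k`. -/
noncomputable def trdeg (k A : Type*) [CommRing k] [CommRing A] [Algebra k A] : Cardinal :=
  ⨆ s : { s : Set A // AlgebraicIndependent k ((↑) : s → A) }, Cardinal.mk s.1

/-- The `k`-algebra structure on the fraction field of a `k`-algebra `S`, obtained by
composing `k → S → Frac(S)`. -/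
noncomputable def fractionRingAlgebra (k S : Type*) [CommRing k] [CommRing S] [Algebra k S] :
    Algebra k (FractionRing S) :=
  ((algebraMap S (FractionRing S)).comp (algebraMap k S)).toAlgebra

/-- `td(S)`: the transcendence degree over `k` of the fraction field of `S`. -/
noncomputable def fractionFieldTrdeg (k S : Type*) [CommRing k] [CommRing S] [Algebra k S] :
    Cardinal :=
  @trdeg k (FractionRing S) _ _ (fractionRingAlgebra k S)

/-!
Upper bound: for primes `P < Q` of `R`, the transcendence degree of `R ⧸ Q` is strictly smaller
than that of `R ⧸ P`. Otherwise a transcendence basis of `R ⧸ Q` would lift to one of `R ⧸ P`; the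
nonzero ideal `Q ⧸ P` would then contain a nonzero polynomial in the lifted basis, whose image in
`R ⧸ Q` vanishes.

Lower bound: by Zariski's lemma over the fraction field of `R`, there is a prime `Q` of `T` lying
over `0` such that `T ⧸ Q` is algebraic over `R`. Inverting a single nonzero `f` in `R` makes
`(T ⧸ Q)_f` integral over `R_f`, so `dim R ≥ dim R_f ≥ dim (T ⧸ Q)_f`. The last ring is an affine
domain containing `R`, hence by Noether normalization its dimension is at least the transcendence
degree of `R`.
-/

open Cardinal TensorProduct

universe u

theorem krullDim_le_of_strictAnti_nat {α : Type*} [Preorder α] {F : α → ℕ} (hF : StrictAnti F)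
    {n : ℕ} (hn : ∀ a, F a ≤ n) : Order.krullDim α ≤ n := by
  have hmono : StrictMono fun a ↦ n - F a := fun a b hab ↦
    Nat.sub_lt_sub_left ((hF hab).trans_le (hn a)) (hF hab)
  refine iSup_le fun l ↦ ?_
  have hle : (l.map _ hmono).length ≤ n :=
    (Nat.le_add_left _ _).trans <| (l.map _ hmono).head_add_length_le_nat.trans (Nat.sub_le _ _)
  exact_mod_cast hle

section RingKrullDim

variable {A B : Type*} [CommRing A] [CommRing B]

theorem ringKrullDim_le_of_isIntegral {f : A →+* B} (hf : f.IsIntegral) :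
    ringKrullDim B ≤ ringKrullDim A := by
  algebraize [f]
  exact Order.krullDim_le_of_strictMono (PrimeSpectrum.comap (algebraMap A B)) fun _ _ hPQ ↦
    Ideal.IsIntegral.comap_lt_comap hPQ

theorem ringKrullDim_le_of_isIntegral_of_injective {f : A →+* B} (hf : f.IsIntegral)
    (hinj : Function.Injective f) : ringKrullDim A ≤ ringKrullDim B := by
  algebraize [f]
  have : FaithfulSMul A B := (faithfulSMul_iff_algebraMap_injective A B).2 hinj
  refine iSup_le fun l ↦ ?_
  obtain ⟨⟨Q, _, _⟩⟩ := l.head.asIdeal.nonempty_primesOver (S := B)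
  obtain ⟨L, hL, -⟩ := Ideal.exists_ltSeries_of_hasGoingUp l Q
  exact hL ▸ Order.LTSeries.length_le_krullDim L

theorem ringKrullDim_le_of_isLocalization [Algebra A B] (M : Submonoid A) [IsLocalization M B] :
    ringKrullDim B ≤ ringKrullDim A :=
  Order.krullDim_le_of_strictMono (PrimeSpectrum.comap (algebraMap A B)) <|
    Monotone.strictMono_of_injective (fun _ _ h ↦ Ideal.comap_mono h)
      (PrimeSpectrum.localization_comap_injective B M)

end RingKrullDim

theorem trdeg_lt_of_surjective_of_not_injective {k : Type*} {A B : Type u} [CommRing k]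
    [CommRing A] [IsDomain A] [CommRing B] [IsDomain B] [Algebra k A] [Algebra k B]
    [FaithfulSMul k B] (hfin : Algebra.trdeg k A < ℵ₀) {f : A →ₐ[k] B}
    (hsurj : Function.Surjective f) (hinj : ¬ Function.Injective f) :
    Algebra.trdeg k B < Algebra.trdeg k A := by
  by_contra! hle
  have : Nontrivial k := (algebraMap k B).domain_nontrivial
  obtain ⟨s, hs⟩ := exists_isTranscendenceBasis k B
  choose g hg using hsurj
  let x : s → A := fun i ↦ g i
  have hindep : AlgebraicIndependent k (f ∘ x) := by
    rw [show f ∘ x = (↑) from funext fun i ↦ hg i]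
    exact hs.1
  have hbasis : IsTranscendenceBasis k x :=
    (hindep.of_comp f).isTranscendenceBasis_of_trdeg_le hfin (by rwa [hs.cardinalMk_eq_trdeg])
  obtain ⟨a, hfa, ha⟩ : ∃ a, f a = 0 ∧ a ≠ 0 := by
    simpa only [injective_iff_map_eq_zero, not_forall, exists_prop] using hinj
  refine Ideal.comap_ne_bot_of_algebraic_mem (I := RingHom.ker f) ha hfa (hbasis.isAlgebraic.1 a)
    ((Submodule.eq_bot_iff _).2 fun r hr ↦ ?_)
  obtain ⟨p, hp⟩ : ∃ p, MvPolynomial.aeval (R := k) x p = r :=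
    AlgHom.mem_range _ |>.1 (Algebra.adjoin_range_eq_range_aeval k x ▸ r.2)
  have hfp : MvPolynomial.aeval (f ∘ x) p = 0 :=
    (MvPolynomial.comp_aeval_apply x f p).symm.trans (hp ▸ hr)
  refine Subtype.ext ?_
  rw [← hp, hindep.eq_zero_of_aeval_eq_zero p hfp, map_zero, ZeroMemClass.coe_zero]

theorem ringKrullDim_le_toENat_trdeg (k A : Type*) [Field k] [CommRing A] [Algebra k A] :
    ringKrullDim A ≤ toENat (Algebra.trdeg k A) := by
  rcases lt_or_ge (Algebra.trdeg k A) ℵ₀ with hfin | hinf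
  · have hle (P : PrimeSpectrum A) : Algebra.trdeg k (A ⧸ P.asIdeal) ≤ Algebra.trdeg k A :=
      trdeg_le_of_surjective (Ideal.Quotient.mkₐ k _) (Ideal.Quotient.mkₐ_surjective k _)
    have hanti : StrictAnti fun P : PrimeSpectrum A ↦ toNat (Algebra.trdeg k (A ⧸ P.asIdeal)) := by
      intro P Q hPQ
      have hPQ' : P.asIdeal ≤ Q.asIdeal := hPQ.le
      have hinj : ¬ Function.Injective (Ideal.Quotient.factorₐ k hPQ') := fun h ↦
        hPQ.not_ge fun a ha ↦ Ideal.Quotient.eq_zero_iff_mem.1 <|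
          (map_eq_zero_iff _ h).1 (Ideal.Quotient.eq_zero_iff_mem.2 ha)
      exact toNat_lt_toNat (trdeg_lt_of_surjective_of_not_injective ((hle P).trans_lt hfin)
        (Ideal.Quotient.factor_surjective hPQ') hinj) ((hle P).trans_lt hfin)
    rw [← cast_toNat_of_lt_aleph0 hfin, toENat_nat]
    exact krullDim_le_of_strictAnti_nat hanti fun P ↦ toNat_le_toNat (hle P) hfin
  · rw [toENat_eq_top.2 hinf]
    exact le_top

theorem toENat_trdeg_le_ringKrullDim_of_finiteType (k B : Type*) [Field k] [CommRing B]
    [IsDomain B] [Algebra k B] [Algebra.FiniteType k B] :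
    toENat (Algebra.trdeg k B) ≤ ringKrullDim B := by
  obtain ⟨n, g, hinj, hint⟩ := exists_integral_inj_algHom_of_fg k B
  have hdim : (n : WithBot ℕ∞) ≤ ringKrullDim B := by
    simpa using ringKrullDim_le_of_isIntegral_of_injective hint hinj
  have htrdeg : Algebra.trdeg k B = n := by
    algebraize [g.toRingHom]
    have : FaithfulSMul (MvPolynomial (Fin n) k) B :=
      (faithfulSMul_iff_algebraMap_injective _ _).2 hinj
    have : IsScalarTower k (MvPolynomial (Fin n) k) B := .of_algHom g
    simpa [trdeg_eq_zero (R := MvPolynomial (Fin n) k) (A := B), eq_comm]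
      using lift_trdeg_add_eq k (MvPolynomial (Fin n) k) B
  simpa [htrdeg] using hdim

theorem exists_isPrime_isAlgebraic_quotient (A T : Type*) [CommRing A] [IsDomain A] [CommRing T]
    [Algebra A T] [FaithfulSMul A T] [Algebra.FiniteType A T] :
    ∃ Q : Ideal T, Q.IsPrime ∧ FaithfulSMul A (T ⧸ Q) ∧ Algebra.IsAlgebraic A (T ⧸ Q) := by
  let K := FractionRing A
  have : Nontrivial (K ⊗[A] T) := (Algebra.TensorProduct.includeLeft_injective (S := A) (A := K)
    (FaithfulSMul.algebraMap_injective A T)).nontrivial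
  obtain ⟨m, _⟩ := Ideal.exists_maximal (K ⊗[A] T)
  let L := K ⊗[A] T ⧸ m
  let : Field L := Ideal.Quotient.field m
  have : Module.Finite K L := finite_of_finite_type_of_isJacobsonRing K L
  have : Algebra.IsAlgebraic K L := .of_finite K L
  have : Algebra.IsAlgebraic A K := IsLocalization.isAlgebraic K (nonZeroDivisors A)
  have : Algebra.IsAlgebraic A L := .trans A K L
  have hAL : Function.Injective (algebraMap A L) := by
    rw [IsScalarTower.algebraMap_eq A K L]
    exact (algebraMap K L).injective.comp (IsFractionRing.injective A K)
  let φ : T →ₐ[A] L := (Ideal.Quotient.mkₐ A m).comp Algebra.TensorProduct.includeRight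
  refine ⟨RingHom.ker φ, RingHom.ker_isPrime φ, ?_,
    .of_injective _ (Ideal.kerLiftAlg_injective φ)⟩
  rw [← (Ideal.kerLiftAlg φ).comp_algebraMap, RingHom.coe_comp] at hAL
  exact (faithfulSMul_iff_algebraMap_injective _ _).2 (.of_comp hAL)

theorem exists_awayMap_isIntegral (A B : Type*) [CommRing A] [IsDomain A] [CommRing B]
    [Algebra A B] [Algebra.FiniteType A B] [Algebra.IsAlgebraic A B] :
    ∃ f : A, f ≠ 0 ∧ (Localization.awayMap (algebraMap A B) f).IsIntegral := by
  obtain ⟨s, hs⟩ := Algebra.FiniteType.out (R := A) (A := B)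
  obtain ⟨f, hf, hint⟩ := Algebra.IsAlgebraic.exists_integral_multiples A s
  refine ⟨f, hf, ?_⟩
  let Af := Localization.Away f
  let Bf := Localization.Away (algebraMap A B f)
  algebraize [Localization.awayMap (algebraMap A B) f]
  have : IsScalarTower A Af Bf := .of_algebraMap_eq fun a ↦ by
    rw [RingHom.algebraMap_toAlgebra, Localization.awayMap, IsLocalization.Away.map,
      IsLocalization.map_eq, ← IsScalarTower.algebraMap_apply]
  have hinv (n : ℕ) : algebraMap Af Bf (IsLocalization.Away.invSelf f ^ n) *
      algebraMap A Bf f ^ n = 1 := by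
    rw [IsScalarTower.algebraMap_apply A Af Bf, ← map_pow, ← map_mul, ← mul_pow, mul_comm,
      IsLocalization.Away.mul_invSelf, one_pow, map_one]
  have hgen : Algebra.adjoin A s ≤
      ((integralClosure Af Bf).restrictScalars A).comap (IsScalarTower.toAlgHom A B Bf) := by
    refine Algebra.adjoin_le fun b hb ↦ IsIntegral.of_mul_unit (hinv 1) ?_
    simpa [Algebra.smul_def, IsScalarTower.algebraMap_apply A B Bf, mul_comm]
      using ((hint b hb).map (IsScalarTower.toAlgHom A B Bf)).tower_top (A := Af)
  intro z
  obtain ⟨n, b, hb⟩ := IsLocalization.Away.surj (algebraMap A B f) z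
  refine IsIntegral.of_mul_unit (hinv n) ?_
  rw [IsScalarTower.algebraMap_apply A B Bf, hb]
  exact hgen (hs ▸ Algebra.mem_top)

theorem toENat_trdeg_le_ringKrullDim (k A T : Type*) [Field k] [CommRing A] [IsDomain A]
    [CommRing T] [Algebra k A] [Algebra k T] [Algebra A T] [IsScalarTower k A T]
    [FaithfulSMul A T] [Algebra.FiniteType k T] :
    toENat (Algebra.trdeg k A) ≤ ringKrullDim A := by
  have : Algebra.FiniteType A T := .of_restrictScalars_finiteType k A T
  obtain ⟨Q, _, _, _⟩ := exists_isPrime_isAlgebraic_quotient A T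
  obtain ⟨f, hf, hint⟩ := exists_awayMap_isIntegral A (T ⧸ Q)
  let C := Localization.Away (algebraMap A (T ⧸ Q) f)
  have hpow : Submonoid.powers (algebraMap A (T ⧸ Q) f) ≤ nonZeroDivisors (T ⧸ Q) :=
    powers_le_nonZeroDivisors_of_noZeroDivisors (by simpa using hf)
  have : IsDomain C := IsLocalization.isDomain_localization hpow
  have : Algebra.FiniteType (T ⧸ Q) C :=
    IsLocalization.finiteType_of_monoid_fg (Submonoid.powers (algebraMap A (T ⧸ Q) f)) C
  have : Algebra.FiniteType k C := .trans (S := T ⧸ Q) inferInstance inferInstance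
  have hAC : Function.Injective (IsScalarTower.toAlgHom k A C) := by
    rw [IsScalarTower.coe_toAlgHom', IsScalarTower.algebraMap_eq A (T ⧸ Q) C]
    exact (IsLocalization.injective C hpow).comp (FaithfulSMul.algebraMap_injective A (T ⧸ Q))
  calc (toENat (Algebra.trdeg k A) : WithBot ℕ∞)
      ≤ toENat (Algebra.trdeg k C) := by
        simpa using toENat.monotone' (lift_trdeg_le_of_injective _ hAC)
    _ ≤ ringKrullDim C := toENat_trdeg_le_ringKrullDim_of_finiteType k C
    _ ≤ ringKrullDim (Localization.Away f) := ringKrullDim_le_of_isIntegral hint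
    _ ≤ ringKrullDim A := ringKrullDim_le_of_isLocalization (Submonoid.powers f)

theorem fractionFieldTrdeg_eq_trdeg (k S : Type*) [CommRing k] [CommRing S] [IsDomain S]
    [Algebra k S] [FaithfulSMul k S] : fractionFieldTrdeg k S = Algebra.trdeg k S := by
  have halg : fractionRingAlgebra k S = (inferInstance : Algebra k (FractionRing S)) :=
    Algebra.algebra_ext _ _ fun r ↦ (IsScalarTower.algebraMap_apply k S (FractionRing S) r).symm
  have : Nontrivial k := (algebraMap k S).domain_nontrivial
  have : Algebra.IsAlgebraic S (FractionRing S) :=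
    IsLocalization.isAlgebraic (FractionRing S) (nonZeroDivisors S)
  calc fractionFieldTrdeg k S
      = Algebra.trdeg k (FractionRing S) := by
        rw [fractionFieldTrdeg, halg]
        rfl
    _ = Algebra.trdeg k S := by
        rw [← trdeg_add_eq k S (A := FractionRing S), trdeg_eq_zero (R := S), add_zero]

theorem ringKrullDim_eq_trdeg_of_subalgebra_of_affine_general {k T : Type*} [Field k] [CommRing T]
    [Algebra k T] [Algebra.FiniteType k T] (R : Subalgebra k T) [IsDomain R] :
    ringKrullDim R = toENat (fractionFieldTrdeg k R) := by
  rw [fractionFieldTrdeg_eq_trdeg]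
  exact le_antisymm (ringKrullDim_le_toENat_trdeg k R) (toENat_trdeg_le_ringKrullDim k R T)

/-- Let `k` be a field and `R` a `k`-subalgebra of an affine domain `T` over `k`.  Then
the Krull dimension of `R` equals the transcendence degree over `k` of the fraction
field of `R`. -/
theorem ringKrullDim_eq_trdeg_of_subalgebra_of_affine
    {k T : Type*} [Field k] [CommRing T] [IsDomain T] [Algebra k T]
    [Algebra.FiniteType k T] (R : Subalgebra k T) :
    ringKrullDim R = ((Cardinal.toENat (fractionFieldTrdeg k R) : ℕ∞) : WithBot ℕ∞) :=
  ringKrullDim_eq_trdeg_of_subalgebra_of_affine_general R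
end

section
/- Let R ⊆ T be an extension of integral domains such that T is integral over R and T is flat as an R-module. Then for every prime ideal P of R, the height of the extended ideal PT in T equals the height of P in R, where the height of a proper ideal is the infimum of the heights of the prime ideals containing it. -/
/-- The height of an ideal `I` of `T`: the infimum of the heights of the prime ideals of
`T` containing `I`, the height of a prime ideal `Q` being the Krull dimension of the
localization `T_Q`. -/
noncomputable def idealHeight {T : Type*} [CommRing T] (I : Ideal T) : WithBot (WithTop ℕ) :=
  ⨅ (Q : Ideal T) (hQ : Q.IsPrime) (_ : I ≤ Q), ringKrullDim (@Localization.AtPrime T _ Q hQ)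

/-!
Integrality makes contraction of primes `Spec T → Spec R` strictly monotone, so a prime of `T` has
height at most that of its contraction; going-down, which flatness provides, lifts chains below the
contraction and gives the opposite inequality. Primes containing `IT` contract to primes containing
`I`, and by lying-over every prime containing `I` is such a contraction, so the two infima agree.
-/

theorem idealHeight_eq_height {T : Type*} [CommRing T] (I : Ideal T) :
    idealHeight I = (I.height : WithBot ℕ∞) := by
  apply le_antisymm
  · induction hI : I.height using ENat.recTopCoe with
    | top => exact le_top
    | coe n =>
      obtain ⟨Q, hQ, hIQ, hQn⟩ := Ideal.exists_isPrime_height_eq hI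
      rw [← hQn, ← IsLocalization.AtPrime.ringKrullDim_eq_height Q (Localization.AtPrime Q)]
      exact iInf_le_of_le Q (iInf₂_le hQ hIQ)
  · refine le_iInf fun Q ↦ le_iInf₂ fun hQ hIQ ↦ ?_
    rw [IsLocalization.AtPrime.ringKrullDim_eq_height Q]
    exact WithBot.coe_le_coe.mpr (Ideal.height_mono hIQ)

theorem idealHeight_eq_ringKrullDim_localization {T : Type*} [CommRing T]
    (Q : Ideal T) [Q.IsPrime] :
    idealHeight Q = ringKrullDim (Localization.AtPrime Q) := by
  rw [idealHeight_eq_height, IsLocalization.AtPrime.ringKrullDim_eq_height Q]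

section

variable {R T : Type*} [CommRing R] [CommRing T] [Algebra R T]

theorem strictMono_comap_algebraMap_of_isIntegral [Algebra.IsIntegral R T] :
    StrictMono (PrimeSpectrum.comap (algebraMap R T)) :=
  fun Q₁ Q₂ hQ ↦
    Ideal.IsIntegral.comap_lt_comap (I := Q₁.asIdeal) (J := Q₂.asIdeal) hQ

theorem height_le_height_comap_of_isIntegral [Algebra.IsIntegral R T] (Q : Ideal T) [Q.IsPrime] :
    Q.height ≤ (Q.comap (algebraMap R T)).height := by
  let q : PrimeSpectrum T := ⟨Q, inferInstance⟩
  calc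
    Q.height = Order.height q := PrimeSpectrum.height_eq_orderHeight q
    _ ≤ Order.height (PrimeSpectrum.comap (algebraMap R T) q) :=
      Order.height_le_height_apply_of_strictMono _ strictMono_comap_algebraMap_of_isIntegral q
    _ = (Q.comap (algebraMap R T)).height := (PrimeSpectrum.height_eq_orderHeight _).symm

theorem height_comap_le_height_of_hasGoingDown [Algebra.HasGoingDown R T]
    (Q : Ideal T) [Q.IsPrime] :
    (Q.comap (algebraMap R T)).height ≤ Q.height := by
  let q : PrimeSpectrum T := ⟨Q, inferInstance⟩
  suffices Order.height (PrimeSpectrum.comap (algebraMap R T) q) ≤ Order.height q by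
    rwa [← PrimeSpectrum.height_eq_orderHeight, ← PrimeSpectrum.height_eq_orderHeight] at this
  refine Order.height_le fun chain hchain ↦ ?_
  have : Q.LiesOver chain.last.asIdeal := ⟨congrArg PrimeSpectrum.asIdeal hchain⟩
  obtain ⟨lift, hlength, hlast, -⟩ := Ideal.exists_ltSeries_of_hasGoingDown (S := T) chain Q
  rw [← hlength]
  exact Order.length_le_height hlast.le

theorem height_map_le_height_of_isIntegral [Algebra.IsIntegral R T]
    {I : Ideal R} (hI : RingHom.ker (algebraMap R T) ≤ I) :
    (I.map (algebraMap R T)).height ≤ I.height := by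
  induction hheight : I.height using ENat.recTopCoe with
  | top => exact le_top
  | coe n =>
    obtain ⟨P, hP, hIP, hPn⟩ := Ideal.exists_isPrime_height_eq hheight
    obtain ⟨Q, -, hQ, hQP⟩ :=
      Ideal.exists_ideal_over_prime_of_isIntegral P (⊥ : Ideal T) (hI.trans hIP)
    calc
      (I.map (algebraMap R T)).height ≤ Q.height :=
        Ideal.height_mono (Ideal.map_le_iff_le_comap.mpr (hIP.trans_eq hQP.symm))
      _ ≤ (Q.comap (algebraMap R T)).height := height_le_height_comap_of_isIntegral Q
      _ = n := by rw [hQP, hPn]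

theorem height_le_height_map_of_hasGoingDown [Algebra.HasGoingDown R T] (I : Ideal R) :
    I.height ≤ (I.map (algebraMap R T)).height := by
  rw [Ideal.height_eq_inf_minimalPrimes (I.map _)]
  refine le_iInf₂ fun Q hQ ↦ ?_
  have : Q.IsPrime := hQ.isPrime
  calc
    I.height ≤ (Q.comap (algebraMap R T)).height :=
      Ideal.height_mono (Ideal.map_le_iff_le_comap.mp hQ.le)
    _ ≤ Q.height := height_comap_le_height_of_hasGoingDown Q

theorem idealHeight_map_eq_of_integral_of_flat_general
    [Algebra.IsIntegral R T] [Algebra.HasGoingDown R T]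
    {I : Ideal R} (hI : RingHom.ker (algebraMap R T) ≤ I) :
    idealHeight (I.map (algebraMap R T)) = idealHeight I := by
  rw [idealHeight_eq_height, idealHeight_eq_height]
  exact congrArg _ <|
    (height_map_le_height_of_isIntegral hI).antisymm (height_le_height_map_of_hasGoingDown I)

end

/-- Let `R ⊆ T` be an extension of integral domains such that `T` is integral over `R` and
`T` is flat as an `R`-module.  Then for every prime ideal `P` of `R`, the height of the
extended ideal `PT` in `T` equals the height of `P` in `R` (the latter being the Krull
dimension of the localization `R_P`). -/
theorem idealHeight_map_eq_of_integral_of_flat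
    {R T : Type*} [CommRing R] [IsDomain R] [CommRing T] [IsDomain T] [Algebra R T]
    (hRT : Function.Injective (algebraMap R T))
    [Algebra.IsIntegral R T] [Module.Flat R T]
    (P : Ideal R) (hP : P.IsPrime) :
    idealHeight (P.map (algebraMap R T)) = ringKrullDim (Localization.AtPrime P) := by
  rw [idealHeight_map_eq_of_integral_of_flat_general
    (((RingHom.injective_iff_ker_eq_bot _).mp hRT).trans_le bot_le),
    idealHeight_eq_ringKrullDim_localization]
end
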